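/- arXiv:1601.07113 — 2 statements merged into one kernel-verified Lean document; each statement's English description precedes it below -/
import Mathlib

section
/- Let α > 0, β > 0, t₀ > 0, let Φ : H → ℝ be convex and twice continuously differentiable, and let x : [t₀, ∞) → H be a solution of (DIN-AVD). Then, as t → ∞, each of W₀(t), W_β(t) and Φ(x(t)) converges (in the extended reals ℝ ∪ {−∞}) to inf Φ. -/
open Filter MeasureTheory Set
open scoped Topology RealInnerProductSpace

variable {H : Type*} [NormedAddCommGroup H] [InnerProductSpace ℝ H] [CompleteSpace H]

/-- `x`, together with its first and second derivatives `x'`, `x''`, is a twice continuously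
differentiable solution of (DIN-AVD) on `[t₀, ∞)`:
`ẍ(t) + (α/t) ẋ(t) + β ∇²Φ(x(t)) ẋ(t) + ∇Φ(x(t)) = 0`. -/
def IsDINAVDSolution (α β t₀ : ℝ) (Φ : H → ℝ) (x x' x'' : ℝ → H) : Prop :=
  (∀ t ∈ Set.Ici t₀, HasDerivAt x (x' t) t) ∧
  (∀ t ∈ Set.Ici t₀, HasDerivAt x' (x'' t) t) ∧
  ContinuousOn x'' (Set.Ici t₀) ∧
  ∀ t ∈ Set.Ici t₀,
    x'' t + (α / t) • x' t + β • (fderiv ℝ (gradient Φ) (x t)) (x' t)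
      + gradient Φ (x t) = 0

/-- The energy function `W_θ`. -/
noncomputable def energyW (β θ : ℝ) (Φ : H → ℝ) (x x' : ℝ → H) (t : ℝ) : ℝ :=
  Φ (x t) + (1 / 2) * ‖x' t + θ • gradient Φ (x t)‖ ^ 2
    + (θ * (β - θ) / 2) * ‖gradient Φ (x t)‖ ^ 2

/-! Along a solution `W_θ` decreases at rate at least `(α / t) (W_θ - Φ(x))` once `α β ≤ 2 t`. Since
`1 / t` is not integrable at infinity, `W_θ` is eventually below any number that exceeds an eventual
upper bound of `Φ(x)`. As `Φ(x) ≤ W₀`, it suffices to bring `W₀` below every `r > inf Φ`.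

If `W₀` stayed above some `r > Φ(z)`, a Lyapunov function combining `W₀` with the position of `x`
relative to `z` would have derivative at most `-(r - Φ(z)) / t` and hence tend to `-∞`. All its
terms but `⟪x - z, ẋ⟫ / t` are bounded below, so that term would tend to `-∞`. This is impossible
because `⟪x - z, ẋ⟫` is the derivative of the nonnegative function `‖x - z‖² / 2`. -/

section Asymptotics

variable {f f' : ℝ → ℝ}

lemma exists_antitoneOn_Ici_of_hasDerivAt_nonpos
    (hf : ∀ᶠ t in atTop, HasDerivAt f (f' t) t) (hf' : ∀ᶠ t in atTop, f' t ≤ 0) :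
    ∃ T, AntitoneOn f (Ici T) := by
  obtain ⟨T, hT⟩ := eventually_atTop.1 (hf.and hf')
  refine ⟨T, antitoneOn_of_hasDerivWithinAt_nonpos (f' := f') (convex_Ici T) ?_ ?_ ?_⟩
  · exact fun t ht => (hT t ht).1.continuousAt.continuousWithinAt
  · exact fun t ht => (hT t (interior_subset ht)).1.hasDerivWithinAt
  · exact fun t ht => (hT t (interior_subset ht)).2

lemma eventually_lt_of_frequently_lt_of_hasDerivAt_nonpos {r : ℝ}
    (hf : ∀ᶠ t in atTop, HasDerivAt f (f' t) t) (hf' : ∀ᶠ t in atTop, f' t ≤ 0)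
    (hr : ∃ᶠ t in atTop, f t < r) : ∀ᶠ t in atTop, f t < r := by
  obtain ⟨T, hT⟩ := exists_antitoneOn_Ici_of_hasDerivAt_nonpos hf hf'
  obtain ⟨t, htr, ht⟩ := (hr.and_eventually (eventually_ge_atTop T)).exists
  filter_upwards [eventually_ge_atTop t] with s hs
  exact (hT ht (ht.trans hs) hs).trans_lt htr

lemma tendsto_atBot_of_hasDerivAt_le_neg_div {c : ℝ} (hc : 0 < c)
    (hf : ∀ᶠ t in atTop, HasDerivAt f (f' t) t) (hf' : ∀ᶠ t in atTop, f' t ≤ -(c / t)) :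
    Tendsto f atTop atBot := by
  obtain ⟨T, hT⟩ : ∃ T, AntitoneOn (fun t => f t + c * Real.log t) (Ici T) := by
    refine exists_antitoneOn_Ici_of_hasDerivAt_nonpos (f' := fun t => f' t + c * t⁻¹) ?_ ?_
    · filter_upwards [hf, eventually_ne_atTop 0] with t ht ht0
      exact ht.add ((Real.hasDerivAt_log ht0).const_mul c)
    · filter_upwards [hf'] with t ht
      rw [div_eq_mul_inv] at ht
      linarith
  have hlog : Tendsto (fun t => f T + c * Real.log T - c * Real.log t) atTop atBot :=
    tendsto_atBot_add_const_left _ _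
      (tendsto_neg_atTop_atBot.comp (Real.tendsto_log_atTop.const_mul_atTop hc))
  refine tendsto_atBot_mono' _ ?_ hlog
  filter_upwards [eventually_ge_atTop T] with t ht
  exact le_sub_iff_add_le.2 (hT self_mem_Ici ht ht)

lemma eventually_lt_of_hasDerivAt_le_neg_div_mul_sub {g : ℝ → ℝ} {α m r : ℝ} (hα : 0 < α)
    (hmr : m < r) (hf : ∀ᶠ t in atTop, HasDerivAt f (f' t) t)
    (hf' : ∀ᶠ t in atTop, f' t ≤ -(α / t * (f t - g t)))
    (hgf : ∀ᶠ t in atTop, g t ≤ f t) (hgm : ∀ᶠ t in atTop, g t ≤ m) :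
    ∀ᶠ t in atTop, f t < r := by
  have hf'_nonpos : ∀ᶠ t in atTop, f' t ≤ 0 := by
    filter_upwards [hf', hgf, eventually_gt_atTop 0] with t ht hgt ht0
    have := mul_nonneg (div_pos hα ht0).le (sub_nonneg.2 hgt)
    linarith
  refine eventually_lt_of_frequently_lt_of_hasDerivAt_nonpos hf hf'_nonpos fun hr => ?_
  have hbot : Tendsto f atTop atBot := by
    refine tendsto_atBot_of_hasDerivAt_le_neg_div (mul_pos hα (sub_pos.2 hmr)) hf ?_
    filter_upwards [hf', hgm, hr, eventually_gt_atTop 0] with t ht hgt hrt ht0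
    calc f' t ≤ -(α / t * (f t - g t)) := ht
      _ ≤ -(α / t * (r - m)) := by gcongr; exact not_lt.1 hrt
      _ = -(α * (r - m) / t) := by rw [div_mul_eq_mul_div]
  obtain ⟨t, hrt, htr⟩ := (hr.and (hbot.eventually_lt_atBot r)).exists
  exact hrt htr

lemma not_tendsto_inner_sub_div_atBot {E : Type*} [NormedAddCommGroup E] [InnerProductSpace ℝ E]
    {y y' : ℝ → E} (hy : ∀ᶠ t in atTop, HasDerivAt y (y' t) t) (z : E) :
    ¬ Tendsto (fun t => ⟪y t - z, y' t⟫ / t) atTop atBot := by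
  intro h
  have hbot : Tendsto (fun t => ‖y t - z‖ ^ 2) atTop atBot := by
    refine tendsto_atBot_of_hasDerivAt_le_neg_div one_pos
      (hy.mono fun t ht => (ht.sub_const z).norm_sq) ?_
    filter_upwards [h.eventually_le_atBot (-1), eventually_ge_atTop 1] with t hle ht
    have ht0 : 0 < t := one_pos.trans_le ht
    have hinner : ⟪y t - z, y' t⟫ ≤ -1 * t := (div_le_iff₀ ht0).1 hle
    have hinv : 1 / t ≤ 1 := (div_le_one ht0).2 ht
    linarith
  obtain ⟨t, ht⟩ := (hbot.eventually_lt_atBot 0).exists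
  exact ht.not_ge (sq_nonneg _)

lemma tendsto_coe_iInf_of_eventually_lt {ι X : Type*} {l : Filter ι} {F : X → ℝ} {y : ι → X}
    {w : ι → ℝ} (hle : ∀ i, F (y i) ≤ w i) (hlt : ∀ z r, F z < r → ∀ᶠ i in l, w i < r) :
    Tendsto (fun i => (w i : EReal)) l (𝓝 (⨅ z, (F z : EReal))) := by
  refine tendsto_order.2 ⟨fun a ha => Eventually.of_forall fun i => ?_, fun a ha => ?_⟩
  · exact ha.trans_le ((iInf_le _ (y i)).trans (EReal.coe_le_coe (hle i)))
  · obtain ⟨z, hz⟩ := iInf_lt_iff.1 ha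
    obtain ⟨r, hzr, hra⟩ := EReal.lt_iff_exists_real_btwn.1 hz
    filter_upwards [hlt z r (EReal.coe_lt_coe_iff.1 hzr)] with i hi
    exact (EReal.coe_lt_coe hi).trans hra

end Asymptotics

section Gradient

variable {Φ : H → ℝ} {y : ℝ → H} {v : H} {t : ℝ}

lemma contDiff_gradient {n : WithTop ℕ∞} (hΦ : ContDiff ℝ (n + 1) Φ) :
    ContDiff ℝ n (gradient Φ) :=
  (InnerProductSpace.toDual ℝ H).symm.contDiff.comp (hΦ.fderiv_right le_rfl)

lemma hasDerivAt_comp_inner_gradient (hΦ : DifferentiableAt ℝ Φ (y t)) (hy : HasDerivAt y v t) :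
    HasDerivAt (Φ ∘ y) ⟪gradient Φ (y t), v⟫ t := by
  rw [inner_gradient_left]
  exact hΦ.hasFDerivAt.comp_hasDerivAt t hy

/-- The Bregman divergence `D(z, a) = Φ(z) - Φ(a) - ⟪∇Φ(a), z - a⟫`, the gap at `z` between `Φ` and
its linearization at `a`. It measures the distance of a trajectory to a comparison point `z`. -/
noncomputable def bregmanDiv (Φ : H → ℝ) (z a : H) : ℝ :=
  Φ z - Φ a - ⟪gradient Φ a, z - a⟫

lemma bregmanDiv_nonneg {s : Set H} {a z : H} (hconv : ConvexOn ℝ s Φ) (ha : a ∈ s) (hz : z ∈ s)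
    (hΦ : DifferentiableAt ℝ Φ a) : 0 ≤ bregmanDiv Φ z a := by
  have hline : ConvexOn ℝ (AffineMap.lineMap a z ⁻¹' s) (Φ ∘ AffineMap.lineMap (k := ℝ) a z) :=
    hconv.comp_affineMap _
  have hderiv : HasDerivAt (Φ ∘ AffineMap.lineMap (k := ℝ) a z) ⟪gradient Φ a, z - a⟫ 0 := by
    rw [← AffineMap.lineMap_apply_zero (k := ℝ) a z] at hΦ
    simpa only [AffineMap.lineMap_apply_zero] using
      hasDerivAt_comp_inner_gradient hΦ AffineMap.hasDerivAt_lineMap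
  have hslope := hline.le_slope_of_hasDerivAt (by simpa using ha) (by simpa using hz) one_pos hderiv
  simp only [slope_def_field, Function.comp_apply, AffineMap.lineMap_apply_zero,
    AffineMap.lineMap_apply_one, sub_zero, div_one] at hslope
  exact sub_nonneg.2 hslope

lemma hasDerivAt_bregmanDiv (hΦ : DifferentiableAt ℝ Φ (y t))
    (hgrad : DifferentiableAt ℝ (gradient Φ) (y t)) (hy : HasDerivAt y v t) (z : H) :
    HasDerivAt (fun s => bregmanDiv Φ z (y s))
      ⟪y t - z, fderiv ℝ (gradient Φ) (y t) v⟫ t := by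
  have hinner := (hgrad.hasFDerivAt.comp_hasDerivAt t hy).inner ℝ (hy.const_sub z)
  refine (((hasDerivAt_comp_inner_gradient hΦ hy).const_sub (Φ z)).sub hinner).congr_deriv ?_
  rw [← neg_sub z (y t), inner_neg_left, inner_neg_right, real_inner_comm (z - y t)]
  simp

lemma monotone_inner_gradient_lineMap (hconv : ConvexOn ℝ univ Φ) (hΦ : Differentiable ℝ Φ)
    (a b : H) : Monotone fun s : ℝ => ⟪gradient Φ (AffineMap.lineMap a b s), b - a⟫ := by
  have hderiv (s : ℝ) : HasDerivAt (Φ ∘ AffineMap.lineMap (k := ℝ) a b)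
      ⟪gradient Φ (AffineMap.lineMap a b s), b - a⟫ s :=
    hasDerivAt_comp_inner_gradient (hΦ _) AffineMap.hasDerivAt_lineMap
  have hmono := (hconv.comp_affineMap (AffineMap.lineMap (k := ℝ) a b)).monotoneOn_deriv
    fun s _ => (hderiv s).differentiableAt
  simpa only [funext fun s => (hderiv s).deriv, preimage_univ, monotoneOn_univ] using hmono

lemma inner_fderiv_gradient_nonneg (hconv : ConvexOn ℝ univ Φ) (hΦ : Differentiable ℝ Φ) {a : H}
    (hgrad : DifferentiableAt ℝ (gradient Φ) a) (v : H) :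
    0 ≤ ⟪fderiv ℝ (gradient Φ) a v, v⟫ := by
  have hline : HasDerivAt (AffineMap.lineMap (k := ℝ) a (a + v)) v 0 := by
    simpa only [add_sub_cancel_left] using AffineMap.hasDerivAt_lineMap (a := a) (b := a + v)
  have hgrad_line : HasDerivAt (fun s : ℝ => gradient Φ (AffineMap.lineMap a (a + v) s))
      (fderiv ℝ (gradient Φ) a v) 0 :=
    hgrad.hasFDerivAt.comp_hasDerivAt_of_eq (0 : ℝ) hline (AffineMap.lineMap_apply_zero a _).symm
  have hmono := monotone_inner_gradient_lineMap hconv hΦ a (a + v)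
  rw [add_sub_cancel_left] at hmono
  simpa only [inner_zero_right, zero_add] using
    (hgrad_line.inner ℝ (hasDerivAt_const 0 v)).nonneg_of_monotone hmono

end Gradient

section Energy

variable {α β θ t : ℝ} {Φ : H → ℝ} {x x' : ℝ → H}

lemma le_energyW (hθ : θ ∈ Icc 0 β) (t : ℝ) : Φ (x t) ≤ energyW β θ Φ x x' t := by
  have hgrad : 0 ≤ θ * (β - θ) / 2 * ‖gradient Φ (x t)‖ ^ 2 := by
    have := mul_nonneg hθ.1 (sub_nonneg.2 hθ.2)
    positivity
  have hvel : 0 ≤ 1 / 2 * ‖x' t + θ • gradient Φ (x t)‖ ^ 2 := by positivity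
  rw [energyW]
  linarith

lemma energyW_eq (β θ : ℝ) (Φ : H → ℝ) (x x' : ℝ → H) (t : ℝ) :
    energyW β θ Φ x x' t = Φ (x t) + 1 / 2 * ‖x' t‖ ^ 2
      + θ * (⟪gradient Φ (x t), x' t⟫ + β / 2 * ‖gradient Φ (x t)‖ ^ 2) := by
  rw [energyW, norm_add_sq_real, inner_smul_right, norm_smul, mul_pow, Real.norm_eq_abs, sq_abs,
    real_inner_comm]
  ring

/-- The dissipation rate `-dW_θ/dt` of the energy `W_θ` along a solution of (DIN-AVD). -/
noncomputable def dissipation (α β θ : ℝ) (Φ : H → ℝ) (x x' : ℝ → H) (t : ℝ) : ℝ :=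
  α / t * ‖x' t‖ ^ 2 + (β - θ) * ⟪fderiv ℝ (gradient Φ) (x t) (x' t), x' t⟫
    + θ * (α / t * ⟪gradient Φ (x t), x' t⟫ + ‖gradient Φ (x t)‖ ^ 2)

lemma div_mul_energyW_sub_le_dissipation (hconv : ConvexOn ℝ univ Φ) (hΦ : Differentiable ℝ Φ)
    (hgrad : DifferentiableAt ℝ (gradient Φ) (x t)) (hα : 0 ≤ α) (hθ : θ ∈ Icc 0 β) (ht : 0 < t)
    (htβ : α * β / 2 ≤ t) :
    α / t * (energyW β θ Φ x x' t - Φ (x t)) ≤ dissipation α β θ Φ x x' t := by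
  have hkin : 0 ≤ α / t / 2 * ‖x' t‖ ^ 2 := by positivity
  have hhess : 0 ≤ (β - θ) * ⟪fderiv ℝ (gradient Φ) (x t) (x' t), x' t⟫ :=
    mul_nonneg (sub_nonneg.2 hθ.2) (inner_fderiv_gradient_nonneg hconv hΦ hgrad _)
  have hsq : 0 ≤ θ * (1 - α * β / 2 / t) * ‖gradient Φ (x t)‖ ^ 2 :=
    mul_nonneg (mul_nonneg hθ.1 (sub_nonneg.2 ((div_le_one ht).2 htβ))) (sq_nonneg _)
  have hgap : dissipation α β θ Φ x x' t - α / t * (energyW β θ Φ x x' t - Φ (x t))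
      = α / t / 2 * ‖x' t‖ ^ 2 + (β - θ) * ⟪fderiv ℝ (gradient Φ) (x t) (x' t), x' t⟫
        + θ * (1 - α * β / 2 / t) * ‖gradient Φ (x t)‖ ^ 2 := by
    rw [dissipation, energyW_eq]
    ring
  linarith

lemma dissipation_nonneg (hconv : ConvexOn ℝ univ Φ) (hΦ : Differentiable ℝ Φ)
    (hgrad : DifferentiableAt ℝ (gradient Φ) (x t)) (hα : 0 ≤ α) (hθ : θ ∈ Icc 0 β) (ht : 0 < t)
    (htβ : α * β / 2 ≤ t) : 0 ≤ dissipation α β θ Φ x x' t :=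
  (mul_nonneg (div_nonneg hα ht.le) (sub_nonneg.2 (le_energyW hθ t))).trans
    (div_mul_energyW_sub_le_dissipation hconv hΦ hgrad hα hθ ht htβ)

/-- The Lyapunov function comparing a trajectory with the point `z`. Its weights are chosen so that
in its derivative the terms in `⟪x - z, ẋ⟫` and `⟪x - z, ∇²Φ(x) ẋ⟫` cancel and the terms in `Φ(x)`
and `‖ẋ‖²` add up to `-W₀ / t`. -/
noncomputable def lyapunov (α β : ℝ) (Φ : H → ℝ) (x x' : ℝ → H) (z : H) (t : ℝ) : ℝ :=
  ⟪x t - z, x' t⟫ / t + (1 + α) / 2 * (‖x t - z‖ ^ 2 / t ^ 2) + β * (bregmanDiv Φ z (x t) / t)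
    + 3 / (2 * α) * energyW β 0 Φ x x' t

lemma inner_div_add_energyW_le_lyapunov (hconv : ConvexOn ℝ univ Φ)
    (hΦ : DifferentiableAt ℝ Φ (x t)) (hα : 0 ≤ 1 + α) (hβ : 0 ≤ β) (ht : 0 ≤ t) (z : H) :
    ⟪x t - z, x' t⟫ / t + 3 / (2 * α) * energyW β 0 Φ x x' t ≤ lyapunov α β Φ x x' z t := by
  have hdist : 0 ≤ (1 + α) / 2 * (‖x t - z‖ ^ 2 / t ^ 2) := by positivity
  have hbreg : 0 ≤ β * (bregmanDiv Φ z (x t) / t) :=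
    mul_nonneg hβ (div_nonneg (bregmanDiv_nonneg hconv (mem_univ _) (mem_univ z) hΦ) ht)
  rw [lyapunov]
  linarith

end Energy

namespace IsDINAVDSolution

variable {α β θ t₀ t : ℝ} {Φ : H → ℝ} {x x' x'' : ℝ → H}

lemma hasDerivAt (hsol : IsDINAVDSolution α β t₀ Φ x x' x'') (ht : t₀ ≤ t) :
    HasDerivAt x (x' t) t :=
  hsol.1 t ht

lemma hasDerivAt_velocity (hsol : IsDINAVDSolution α β t₀ Φ x x' x'') (ht : t₀ ≤ t) :
    HasDerivAt x' (-((α / t) • x' t) - β • fderiv ℝ (gradient Φ) (x t) (x' t)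
      - gradient Φ (x t)) t := by
  refine (hsol.2.1 t ht).congr_deriv ?_
  rw [← sub_eq_zero, ← hsol.2.2.2 t ht]
  module

lemma hasDerivAt_energyW (hsol : IsDINAVDSolution α β t₀ Φ x x' x'')
    (hΦ : DifferentiableAt ℝ Φ (x t)) (hgrad : DifferentiableAt ℝ (gradient Φ) (x t))
    (ht : t₀ ≤ t) (θ : ℝ) :
    HasDerivAt (energyW β θ Φ x x') (-dissipation α β θ Φ x x' t) t := by
  have hpot := hasDerivAt_comp_inner_gradient hΦ (hsol.hasDerivAt ht)
  have hvel := hsol.hasDerivAt_velocity ht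
  have hg := hgrad.hasFDerivAt.comp_hasDerivAt t (hsol.hasDerivAt ht)
  rw [funext (energyW_eq β θ Φ x x')]
  refine ((hpot.add (hvel.norm_sq.const_mul (1 / 2))).add
    (((hg.inner ℝ hvel).add (hg.norm_sq.const_mul (β / 2))).const_mul θ)).congr_deriv ?_
  simp only [dissipation, Function.comp_apply, inner_sub_right, inner_neg_right, inner_smul_right,
    real_inner_self_eq_norm_sq, real_inner_comm (x' t)]
  ring

lemma eventually_hasDerivAt_energyW (hsol : IsDINAVDSolution α β t₀ Φ x x' x'')
    (hΦ : Differentiable ℝ Φ) (hgrad : Differentiable ℝ (gradient Φ)) (θ : ℝ) :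
    ∀ᶠ t in atTop, HasDerivAt (energyW β θ Φ x x') (-dissipation α β θ Φ x x' t) t :=
  (eventually_ge_atTop t₀).mono fun _ ht => hsol.hasDerivAt_energyW (hΦ _) (hgrad _) ht θ

lemma hasDerivAt_inner_sub_velocity (hsol : IsDINAVDSolution α β t₀ Φ x x' x'') (ht : t₀ ≤ t)
    (z : H) :
    HasDerivAt (fun s => ⟪x s - z, x' s⟫)
      (‖x' t‖ ^ 2 - α / t * ⟪x t - z, x' t⟫ - β * ⟪x t - z, fderiv ℝ (gradient Φ) (x t) (x' t)⟫
        - (Φ (x t) - Φ z + bregmanDiv Φ z (x t))) t := by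
  have hbreg : Φ (x t) - Φ z + bregmanDiv Φ z (x t) = ⟪x t - z, gradient Φ (x t)⟫ := by
    rw [bregmanDiv, ← neg_sub z (x t), inner_neg_left, real_inner_comm]
    ring
  refine (((hsol.hasDerivAt ht).sub_const z).inner ℝ
    (hsol.hasDerivAt_velocity ht)).congr_deriv ?_
  simp only [hbreg, inner_sub_right, inner_neg_right, inner_smul_right, real_inner_self_eq_norm_sq]
  ring

lemma hasDerivAt_lyapunov (hsol : IsDINAVDSolution α β t₀ Φ x x' x'')
    (hΦ : DifferentiableAt ℝ Φ (x t)) (hgrad : DifferentiableAt ℝ (gradient Φ) (x t))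
    (hα : α ≠ 0) (ht : t₀ ≤ t) (ht0 : t ≠ 0) (z : H) :
    HasDerivAt (lyapunov α β Φ x x' z)
      (-((energyW β 0 Φ x x' t - Φ z) / t)
        - ((1 + β / t) * (bregmanDiv Φ z (x t) / t) + (1 + α) * (‖x t - z‖ ^ 2 / t ^ 3)
          + 3 / (2 * α) * (β * ⟪fderiv ℝ (gradient Φ) (x t) (x' t), x' t⟫))) t := by
  have hx := hsol.hasDerivAt ht
  have hinner := (hsol.hasDerivAt_inner_sub_velocity ht z).div (hasDerivAt_id t) ht0
  have hdist := (hx.sub_const z).norm_sq.div (hasDerivAt_pow 2 t) (pow_ne_zero 2 ht0)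
  have hbreg := (hasDerivAt_bregmanDiv hΦ hgrad hx z).div (hasDerivAt_id t) ht0
  have hW := hsol.hasDerivAt_energyW hΦ hgrad ht 0
  refine (((hinner.add (hdist.const_mul ((1 + α) / 2))).add (hbreg.const_mul β)).add
    (hW.const_mul (3 / (2 * α)))).congr_deriv ?_
  simp only [energyW_eq, dissipation, id]
  field_simp
  ring

lemma tendsto_lyapunov_atBot (hsol : IsDINAVDSolution α β t₀ Φ x x' x'')
    (hconv : ConvexOn ℝ univ Φ) (hΦ : Differentiable ℝ Φ) (hgrad : Differentiable ℝ (gradient Φ))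
    (hα : 0 < α) (hβ : 0 ≤ β) {z : H} {r : ℝ} (hzr : Φ z < r)
    (hr : ∀ᶠ t in atTop, r ≤ energyW β 0 Φ x x' t) :
    Tendsto (lyapunov α β Φ x x' z) atTop atBot := by
  have hderiv := ((eventually_ge_atTop t₀).and (eventually_ne_atTop 0)).mono fun t ht =>
    hsol.hasDerivAt_lyapunov (hΦ (x t)) (hgrad (x t)) hα.ne' ht.1 ht.2 z
  refine tendsto_atBot_of_hasDerivAt_le_neg_div (sub_pos.2 hzr) hderiv ?_
  filter_upwards [hr, eventually_gt_atTop 0] with t hrt ht0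
  have hbreg : 0 ≤ bregmanDiv Φ z (x t) :=
    bregmanDiv_nonneg hconv (mem_univ _) (mem_univ z) (hΦ _)
  have hhess := inner_fderiv_gradient_nonneg hconv hΦ (hgrad (x t)) (x' t)
  calc _ ≤ -((energyW β 0 Φ x x' t - Φ z) / t) := sub_le_self _ (by positivity)
    _ ≤ -((r - Φ z) / t) := by gcongr

lemma frequently_energyW_zero_lt (hsol : IsDINAVDSolution α β t₀ Φ x x' x'')
    (hconv : ConvexOn ℝ univ Φ) (hΦ : Differentiable ℝ Φ) (hgrad : Differentiable ℝ (gradient Φ))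
    (hα : 0 < α) (hβ : 0 ≤ β) {z : H} {r : ℝ} (hzr : Φ z < r) :
    ∃ᶠ t in atTop, energyW β 0 Φ x x' t < r := by
  intro hr
  simp only [not_lt] at hr
  have hx : ∀ᶠ t in atTop, HasDerivAt x (x' t) t :=
    (eventually_ge_atTop t₀).mono fun t ht => hsol.hasDerivAt ht
  have hlyap := hsol.tendsto_lyapunov_atBot hconv hΦ hgrad hα hβ hzr hr
  refine not_tendsto_inner_sub_div_atBot hx z <| tendsto_atBot_mono' _ ?_ <|
    tendsto_atBot_add_const_right _ (-(3 / (2 * α) * r)) hlyap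
  filter_upwards [hr, eventually_ge_atTop 0] with t hrt ht
  have hle := inner_div_add_energyW_le_lyapunov (x' := x') hconv (hΦ (x t))
    (add_pos one_pos hα).le hβ ht z
  have hW : 3 / (2 * α) * r ≤ 3 / (2 * α) * energyW β 0 Φ x x' t := by gcongr
  linarith

lemma eventually_energyW_lt_of_eventually_le (hsol : IsDINAVDSolution α β t₀ Φ x x' x'')
    (hconv : ConvexOn ℝ univ Φ) (hΦ : Differentiable ℝ Φ) (hgrad : Differentiable ℝ (gradient Φ))
    (hα : 0 < α) (hθ : θ ∈ Icc 0 β) {m r : ℝ} (hmr : m < r) (hm : ∀ᶠ t in atTop, Φ (x t) ≤ m) :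
    ∀ᶠ t in atTop, energyW β θ Φ x x' t < r := by
  refine eventually_lt_of_hasDerivAt_le_neg_div_mul_sub hα hmr
    (hsol.eventually_hasDerivAt_energyW hΦ hgrad θ) ?_ (Eventually.of_forall (le_energyW hθ)) hm
  filter_upwards [eventually_gt_atTop 0, eventually_ge_atTop (α * β / 2)] with t ht htβ
  exact neg_le_neg (div_mul_energyW_sub_le_dissipation hconv hΦ (hgrad _) hα.le hθ ht htβ)

lemma eventually_energyW_zero_lt (hsol : IsDINAVDSolution α β t₀ Φ x x' x'')
    (hconv : ConvexOn ℝ univ Φ) (hΦ : Differentiable ℝ Φ) (hgrad : Differentiable ℝ (gradient Φ))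
    (hα : 0 < α) (hβ : 0 ≤ β) {z : H} {r : ℝ} (hzr : Φ z < r) :
    ∀ᶠ t in atTop, energyW β 0 Φ x x' t < r := by
  refine eventually_lt_of_frequently_lt_of_hasDerivAt_nonpos
    (hsol.eventually_hasDerivAt_energyW hΦ hgrad 0) ?_
    (hsol.frequently_energyW_zero_lt hconv hΦ hgrad hα hβ hzr)
  filter_upwards [eventually_gt_atTop 0, eventually_ge_atTop (α * β / 2)] with t ht htβ
  exact neg_nonpos.2 (dissipation_nonneg hconv hΦ (hgrad _) hα.le (left_mem_Icc.2 hβ) ht htβ)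

lemma eventually_comp_lt (hsol : IsDINAVDSolution α β t₀ Φ x x' x'')
    (hconv : ConvexOn ℝ univ Φ) (hΦ : Differentiable ℝ Φ) (hgrad : Differentiable ℝ (gradient Φ))
    (hα : 0 < α) (hβ : 0 ≤ β) {z : H} {r : ℝ} (hzr : Φ z < r) :
    ∀ᶠ t in atTop, Φ (x t) < r :=
  (hsol.eventually_energyW_zero_lt hconv hΦ hgrad hα hβ hzr).mono fun t =>
    (le_energyW (left_mem_Icc.2 hβ) t).trans_lt

end IsDINAVDSolution

theorem stmt1_general {α β t₀ : ℝ} (hα : 0 < α) (hβ : 0 ≤ β) {Φ : H → ℝ}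
    (hconv : ConvexOn ℝ univ Φ) (hΦ : Differentiable ℝ Φ) (hgrad : Differentiable ℝ (gradient Φ))
    {x x' x'' : ℝ → H} (hsol : IsDINAVDSolution α β t₀ Φ x x' x'') :
    (∀ θ ∈ Icc 0 β,
      Tendsto (fun t => (energyW β θ Φ x x' t : EReal)) atTop (𝓝 (⨅ z : H, (Φ z : EReal)))) ∧
    Tendsto (fun t => (Φ (x t) : EReal)) atTop (𝓝 (⨅ z : H, (Φ z : EReal))) := by
  have hΦx {z : H} {r : ℝ} (hzr : Φ z < r) : ∀ᶠ t in atTop, Φ (x t) < r :=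
    hsol.eventually_comp_lt hconv hΦ hgrad hα hβ hzr
  refine ⟨fun θ hθ => tendsto_coe_iInf_of_eventually_lt (le_energyW hθ) fun z r hzr => ?_,
    tendsto_coe_iInf_of_eventually_lt (fun _ => le_rfl) fun z r hzr => hΦx hzr⟩
  obtain ⟨m, hzm, hmr⟩ := exists_between hzr
  exact hsol.eventually_energyW_lt_of_eventually_le hconv hΦ hgrad hα hθ hmr
    ((hΦx hzm).mono fun _ => le_of_lt)

theorem stmt1 (α β t₀ : ℝ) (hα : 0 < α) (hβ : 0 < β) (ht₀ : 0 < t₀)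
    (Φ : H → ℝ) (hconv : ConvexOn ℝ Set.univ Φ) (hΦ : ContDiff ℝ 2 Φ)
    (x x' x'' : ℝ → H) (hsol : IsDINAVDSolution α β t₀ Φ x x' x'') :
    Tendsto (fun t => (energyW β 0 Φ x x' t : EReal)) atTop (𝓝 (⨅ z : H, (Φ z : EReal))) ∧
    Tendsto (fun t => (energyW β β Φ x x' t : EReal)) atTop (𝓝 (⨅ z : H, (Φ z : EReal))) ∧
    Tendsto (fun t => (Φ (x t) : EReal)) atTop (𝓝 (⨅ z : H, (Φ z : EReal))) := by
  have h := stmt1_general hα hβ.le hconv (hΦ.differentiable two_ne_zero)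
    ((contDiff_gradient (n := 1) hΦ).differentiable one_ne_zero) hsol
  exact ⟨h.1 0 (left_mem_Icc.2 hβ.le), h.1 β (right_mem_Icc.2 hβ.le), h.2⟩
end

section
/- Let α ≥ 3, β > 0, t₀ > 0, let Φ : H → ℝ be convex and twice continuously differentiable with x* ∈ argmin Φ, and let x : [t₀, ∞) → H be a solution of (DIN-AVD). Then for every λ ∈ [2, α−1], the function t ↦ (t/(t−β))^{α−2} · 𝓔_λ(t) is nonincreasing on (max{t₀, β}, ∞), and 𝓔_λ(t) has a finite limit as t → ∞. -/
open Filter MeasureTheory Set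
open scoped Topology RealInnerProductSpace

variable {H : Type*} [NormedAddCommGroup H] [InnerProductSpace ℝ H] [CompleteSpace H]

/-- The energy function `𝓔_λ`. -/
noncomputable def energyE (α β lam : ℝ) (Φ : H → ℝ) (xstar : H) (x x' : ℝ → H) (t : ℝ) : ℝ :=
  t * (t - β * (lam + 2 - α)) * (Φ (x t) - Φ xstar)
    + (1 / 2) * ‖lam • (x t - xstar) + t • (x' t + β • gradient Φ (x t))‖ ^ 2
    + lam * (α - lam - 1) / 2 * ‖x t - xstar‖ ^ 2

/-!
Along a solution, the second-order terms of the equation combine with the Hessian term into the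
derivative of `v_λ(t) = λ(x - x*) + t(ẋ + β∇Φ(x))`, which therefore involves only `ẋ` and `∇Φ(x)`.
This gives a closed formula for `dE_λ/dt` in which every term is dissipative except
`(2t - β(λ + 2 - α))(Φ(x) - min Φ)`. The latter is compensated by the gradient inequality at `x*`
up to `(α - 2)β(Φ(x) - min Φ)`, and `t(t - β)(Φ(x) - min Φ) ≤ E_λ(t)`, so
`dE_λ/dt ≤ (α - 2)β / (t(t - β)) · E_λ`. The integrating factor of this differential inequality is
`(t / (t - β))^(α - 2)`, and it tends to `1`, so `E_λ` converges together with the nonincreasing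
nonnegative product.
-/

section RealFunctions

theorem exists_tendsto_atTop_of_antitoneOn_Ioi {f : ℝ → ℝ} {a : ℝ} (hf : AntitoneOn f (Ioi a))
    (hbdd : BddBelow (f '' Ioi a)) : ∃ L, Tendsto f atTop (𝓝 L) := by
  have hanti : Antitone fun t : Ioi a => f t := fun s t hst => hf s.2 t.2 hst
  have hrange : BddBelow (range fun t : Ioi a => f t) := by
    rwa [image_eq_range] at hbdd
  exact ⟨_, tendsto_comp_val_Ioi_atTop.1 (tendsto_atTop_ciInf hanti hrange)⟩

theorem antitoneOn_mul_of_deriv_le_mul {D : Set ℝ} (hD : Convex ℝ D) {w f a : ℝ → ℝ}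
    (hw : ∀ t ∈ D, HasDerivAt w (-a t * w t) t) (hw_nonneg : ∀ t ∈ D, 0 ≤ w t)
    (hf : ∀ t ∈ D, DifferentiableAt ℝ f t) (hf_le : ∀ t ∈ D, deriv f t ≤ a t * f t) :
    AntitoneOn (fun t => w t * f t) D := by
  have hderiv : ∀ t ∈ D, HasDerivAt (fun t => w t * f t) (w t * (deriv f t - a t * f t)) t :=
    fun t ht => ((hw t ht).mul (hf t ht).hasDerivAt).congr_deriv (by ring)
  refine antitoneOn_of_hasDerivWithinAt_nonpos hD
    (fun t ht => (hderiv t ht).continuousAt.continuousWithinAt)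
    (fun t ht => (hderiv t (interior_subset ht)).hasDerivWithinAt) fun t ht => ?_
  have ht := interior_subset ht
  exact mul_nonpos_of_nonneg_of_nonpos (hw_nonneg t ht) (sub_nonpos.2 (hf_le t ht))

theorem hasDerivAt_div_sub_const_rpow {β t : ℝ} (p : ℝ) (ht : 0 < t) (hβ : β < t) :
    HasDerivAt (fun t => (t / (t - β)) ^ p) (-(p * β / (t * (t - β))) * (t / (t - β)) ^ p) t := by
  have hsub : 0 < t - β := sub_pos.2 hβ
  have hquot : 0 < t / (t - β) := div_pos ht hsub
  have hderiv := ((hasDerivAt_id t).div ((hasDerivAt_id t).sub_const β) hsub.ne').rpow_const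
    (p := p) (Or.inl hquot.ne')
  refine hderiv.congr_deriv ?_
  simp only [id, Pi.div_apply]
  rw [Real.rpow_sub_one hquot.ne']
  field_simp
  ring

theorem tendsto_div_sub_const_rpow_atTop (β p : ℝ) :
    Tendsto (fun t : ℝ => (t / (t - β)) ^ p) atTop (𝓝 1) := by
  have hinv : Tendsto (fun t : ℝ => (1 - β / t)⁻¹) atTop (𝓝 1) := by
    simpa using ((tendsto_id.const_div_atTop β).const_sub 1).inv₀ (by simp)
  have hquot : Tendsto (fun t : ℝ => t / (t - β)) atTop (𝓝 1) := by
    refine hinv.congr' ?_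
    filter_upwards [eventually_ne_atTop 0] with t ht
    rw [one_sub_div ht, inv_div]
  simpa using hquot.rpow_const (p := p) (Or.inl one_ne_zero)

end RealFunctions

section Gradient

theorem add_fderiv_le_of_convexOn {E : Type*} [NormedAddCommGroup E] [NormedSpace ℝ E] {s : Set E}
    {f : E → ℝ} {f' : E →L[ℝ] ℝ} {p q : E} (hf : ConvexOn ℝ s f) (hp : p ∈ s) (hq : q ∈ s)
    (hf' : HasFDerivAt f f' p) : f p + f' (q - p) ≤ f q := by
  let line : ℝ →ᵃ[ℝ] E := AffineMap.lineMap p q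
  have hline : HasDerivAt (f ∘ line) (f' (q - p)) 0 :=
    HasFDerivAt.comp_hasDerivAt (0 : ℝ) (by simpa [line] using hf') AffineMap.hasDerivAt_lineMap
  have hslope : f' (q - p) ≤ slope (f ∘ line) 0 1 :=
    (hf.comp_affineMap line).le_slope_of_hasDerivAt (by simpa [line] using hp)
      (by simpa [line] using hq) one_pos hline
  have : f' (q - p) ≤ f q - f p := by simpa [slope_def_field, line] using hslope
  linarith

theorem sub_le_inner_gradient_of_convexOn {s : Set H} {Φ : H → ℝ} {p q : H}
    (hΦ : ConvexOn ℝ s Φ) (hp : p ∈ s) (hq : q ∈ s) (hd : DifferentiableAt ℝ Φ p) :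
    Φ p - Φ q ≤ ⟪p - q, gradient Φ p⟫ := by
  have htangent := add_fderiv_le_of_convexOn hΦ hp hq hd.hasFDerivAt
  rw [real_inner_comm, inner_gradient_left, ← neg_sub q p, map_neg]
  linarith

theorem differentiable_gradient {Φ : H → ℝ} (hΦ : ContDiff ℝ 2 Φ) :
    Differentiable ℝ (gradient Φ) :=
  (InnerProductSpace.toDual ℝ H).symm.toContinuousLinearEquiv.differentiable.comp
    ((hΦ.fderiv_right (m := 1) (by norm_num)).differentiable (by norm_num))

end Gradient

/-- The vector `v_λ(t) = λ(x(t) - x*) + t(ẋ(t) + β∇Φ(x(t)))`, whose halved squared norm is the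
second term of `energyE`. -/
noncomputable def anchoredVelocity (β lam : ℝ) (Φ : H → ℝ) (xstar : H) (x x' : ℝ → H) (t : ℝ) :
    H :=
  lam • (x t - xstar) + t • (x' t + β • gradient Φ (x t))

section Energy

variable {α β t₀ lam t : ℝ} {Φ : H → ℝ} {xstar : H} {x x' x'' : ℝ → H}

theorem IsDINAVDSolution.hasDerivAt_anchoredVelocity (hsol : IsDINAVDSolution α β t₀ Φ x x' x'')
    (ht₀ : t₀ ≤ t) (ht : t ≠ 0) (hgrad : DifferentiableAt ℝ (gradient Φ) (x t)) :
    HasDerivAt (anchoredVelocity β lam Φ xstar x x')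
      ((lam + 1 - α) • x' t - (t - β) • gradient Φ (x t)) t := by
  obtain ⟨hx, hx', -, hode⟩ := hsol
  have hgradx : HasDerivAt (fun s => gradient Φ (x s)) (fderiv ℝ (gradient Φ) (x t) (x' t)) t :=
    hgrad.hasFDerivAt.comp_hasDerivAt t (hx t ht₀)
  have hderiv := (((hx t ht₀).sub_const xstar).const_smul lam).add
    ((hasDerivAt_id t).smul ((hx' t ht₀).add (hgradx.const_smul β)))
  refine hderiv.congr_deriv ?_
  have haccel : x'' t + β • fderiv ℝ (gradient Φ) (x t) (x' t)
      = -((α / t) • x' t) - gradient Φ (x t) := by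
    rw [← sub_eq_zero, ← hode t ht₀]
    abel
  simp only [id, haccel, Pi.add_apply, Pi.smul_apply]
  rw [smul_sub, smul_neg, smul_smul, mul_div_cancel₀ _ ht]
  module

theorem IsDINAVDSolution.hasDerivAt_energyE (hsol : IsDINAVDSolution α β t₀ Φ x x' x'')
    (ht₀ : t₀ ≤ t) (ht : t ≠ 0) (hΦ : DifferentiableAt ℝ Φ (x t))
    (hgrad : DifferentiableAt ℝ (gradient Φ) (x t)) :
    HasDerivAt (energyE α β lam Φ xstar x x')
      ((2 * t - β * (lam + 2 - α)) * (Φ (x t) - Φ xstar)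
        - lam * (t - β) * ⟪x t - xstar, gradient Φ (x t)⟫
        - t * (α - 1 - lam) * ‖x' t‖ ^ 2 - t * β * (t - β) * ‖gradient Φ (x t)‖ ^ 2) t := by
  have hx : HasDerivAt (fun s => x s - xstar) (x' t) t := (hsol.1 t ht₀).sub_const xstar
  have hΦx : HasDerivAt (fun s => Φ (x s)) ⟪gradient Φ (x t), x' t⟫ t := by
    rw [inner_gradient_left]
    exact hΦ.hasFDerivAt.comp_hasDerivAt t (hsol.1 t ht₀)
  have hcoeff : HasDerivAt (fun s : ℝ => s * (s - β * (lam + 2 - α)))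
      (2 * t - β * (lam + 2 - α)) t :=
    ((hasDerivAt_id t).mul ((hasDerivAt_id t).sub_const _)).congr_deriv (by simp only [id]; ring)
  have hv := hsol.hasDerivAt_anchoredVelocity (lam := lam) (xstar := xstar) ht₀ ht hgrad
  have hE := ((hcoeff.mul (hΦx.sub_const (Φ xstar))).add (hv.norm_sq.const_mul (1 / 2))).add
    (hx.norm_sq.const_mul (lam * (α - lam - 1) / 2))
  refine HasDerivAt.congr_deriv (f := energyE α β lam Φ xstar x x') hE ?_
  unfold anchoredVelocity
  generalize gradient Φ (x t) = g
  generalize x' t = v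
  generalize x t - xstar = y
  simp only [inner_add_left, inner_sub_right, real_inner_smul_left, real_inner_smul_right,
    ← real_inner_self_eq_norm_sq, real_inner_comm v g, real_inner_comm v y, real_inner_comm g y]
  ring

theorem mul_sub_le_energyE (hβ : 0 ≤ β) (hlam : lam ∈ Icc 0 (α - 1)) (ht : 0 ≤ t)
    (hmin : Φ xstar ≤ Φ (x t)) :
    t * (t - β) * (Φ (x t) - Φ xstar) ≤ energyE α β lam Φ xstar x x' t := by
  obtain ⟨hlam_nonneg, hlam_le⟩ := hlam
  have : 0 ≤ Φ (x t) - Φ xstar := sub_nonneg.2 hmin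
  have hpotential : t * (t - β) * (Φ (x t) - Φ xstar)
      ≤ t * (t - β * (lam + 2 - α)) * (Φ (x t) - Φ xstar) := by
    gcongr
    exact mul_le_of_le_one_right hβ (by linarith)
  have hdistance : 0 ≤ lam * (α - lam - 1) / 2 * ‖x t - xstar‖ ^ 2 := by
    have : 0 ≤ α - lam - 1 := by linarith
    positivity
  have hkinetic : 0 ≤ 1 / 2 * ‖lam • (x t - xstar) + t • (x' t + β • gradient Φ (x t))‖ ^ 2 := by
    positivity
  unfold energyE
  linarith

theorem energyE_nonneg (hβ : 0 ≤ β) (hlam : lam ∈ Icc 0 (α - 1)) (ht : β ≤ t)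
    (hmin : Φ xstar ≤ Φ (x t)) : 0 ≤ energyE α β lam Φ xstar x x' t :=
  have ht_nonneg : 0 ≤ t := hβ.trans ht
  (mul_nonneg (mul_nonneg ht_nonneg (sub_nonneg.2 ht)) (sub_nonneg.2 hmin)).trans
    (mul_sub_le_energyE hβ hlam ht_nonneg hmin)

theorem IsDINAVDSolution.deriv_energyE_le (hsol : IsDINAVDSolution α β t₀ Φ x x' x'')
    (hβ : 0 ≤ β) (hlam : lam ∈ Icc 2 (α - 1)) (ht₀ : t₀ ≤ t) (ht : β < t)
    (hΦ : DifferentiableAt ℝ Φ (x t)) (hgrad : DifferentiableAt ℝ (gradient Φ) (x t))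
    (hmin : Φ xstar ≤ Φ (x t)) (hstar : Φ (x t) - Φ xstar ≤ ⟪x t - xstar, gradient Φ (x t)⟫) :
    deriv (energyE α β lam Φ xstar x x') t
      ≤ (α - 2) * β / (t * (t - β)) * energyE α β lam Φ xstar x x' t := by
  obtain ⟨hlam_two, hlam_le⟩ := hlam
  have ht_pos : 0 < t := hβ.trans_lt ht
  have hsub : 0 < t - β := sub_pos.2 ht
  have : 0 ≤ Φ (x t) - Φ xstar := sub_nonneg.2 hmin
  rw [(hsol.hasDerivAt_energyE ht₀ ht_pos.ne' hΦ hgrad).deriv]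
  have hinner : lam * (t - β) * (Φ (x t) - Φ xstar)
      ≤ lam * (t - β) * ⟪x t - xstar, gradient Φ (x t)⟫ := by gcongr
  have hvelocity : 0 ≤ t * (α - 1 - lam) * ‖x' t‖ ^ 2 := by
    have : 0 ≤ α - 1 - lam := by linarith
    positivity
  have hgradient : 0 ≤ t * β * (t - β) * ‖gradient Φ (x t)‖ ^ 2 := by positivity
  have hgrowth : 0 ≤ (lam - 2) * t * (Φ (x t) - Φ xstar) := by
    have : 0 ≤ lam - 2 := by linarith
    positivity
  calc _ ≤ (α - 2) * β * (Φ (x t) - Φ xstar) := by linarith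
    _ = (α - 2) * β / (t * (t - β)) * (t * (t - β) * (Φ (x t) - Φ xstar)) := by field_simp
    _ ≤ _ := by
      have : 0 ≤ α - 2 := by linarith
      gcongr
      exact mul_sub_le_energyE hβ ⟨by linarith, hlam_le⟩ ht_pos.le hmin

theorem IsDINAVDSolution.antitoneOn_rpow_mul_energyE
    (hsol : IsDINAVDSolution α β t₀ Φ x x' x'') (hβ : 0 ≤ β) (hlam : lam ∈ Icc 2 (α - 1))
    (hΦ : Differentiable ℝ Φ) (hgrad : Differentiable ℝ (gradient Φ))
    (hmin : ∀ z, Φ xstar ≤ Φ z) (hstar : ∀ z, Φ z - Φ xstar ≤ ⟪z - xstar, gradient Φ z⟫) :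
    AntitoneOn (fun t => (t / (t - β)) ^ (α - 2) * energyE α β lam Φ xstar x x' t)
      (Ioi (max t₀ β)) := by
  refine antitoneOn_mul_of_deriv_le_mul (a := fun t => (α - 2) * β / (t * (t - β)))
    (convex_Ioi _) (fun t ht => ?_) (fun t ht => ?_) (fun t ht => ?_) fun t ht => ?_
  all_goals
    obtain ⟨ht₀, htβ⟩ := max_lt_iff.1 (mem_Ioi.1 ht)
    have ht_pos : 0 < t := hβ.trans_lt htβ
  · exact hasDerivAt_div_sub_const_rpow _ ht_pos htβ
  · exact Real.rpow_nonneg (div_nonneg ht_pos.le (sub_nonneg.2 htβ.le)) _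
  · exact (hsol.hasDerivAt_energyE ht₀.le ht_pos.ne' (hΦ _) (hgrad _)).differentiableAt
  · exact hsol.deriv_energyE_le hβ hlam ht₀.le htβ (hΦ _) (hgrad _) (hmin _) (hstar _)

theorem bddBelow_rpow_mul_energyE (hβ : 0 ≤ β) (hlam : lam ∈ Icc 0 (α - 1))
    (hmin : ∀ z, Φ xstar ≤ Φ z) (p : ℝ) :
    BddBelow ((fun t => (t / (t - β)) ^ p * energyE α β lam Φ xstar x x' t) '' Ioi β) := by
  refine ⟨0, forall_mem_image.2 fun t (ht : β < t) => mul_nonneg (Real.rpow_nonneg ?_ _) ?_⟩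
  · exact div_nonneg (hβ.trans ht.le) (sub_nonneg.2 ht.le)
  · exact energyE_nonneg hβ hlam ht.le (hmin _)

end Energy

/-- `hstar` is the first-order form of star-convexity of `Φ` at `xstar`; for `β = 0` the system has
no Hessian damping. -/
theorem stmt5_general {α β t₀ lam : ℝ} {Φ : H → ℝ} {xstar : H} {x x' x'' : ℝ → H}
    (hsol : IsDINAVDSolution α β t₀ Φ x x' x'') (hβ : 0 ≤ β) (hlam : lam ∈ Icc 2 (α - 1))
    (hΦ : Differentiable ℝ Φ) (hgrad : Differentiable ℝ (gradient Φ))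
    (hmin : ∀ z, Φ xstar ≤ Φ z) (hstar : ∀ z, Φ z - Φ xstar ≤ ⟪z - xstar, gradient Φ z⟫) :
    AntitoneOn (fun t => (t / (t - β)) ^ (α - 2) * energyE α β lam Φ xstar x x' t)
      (Ioi (max t₀ β)) ∧
    ∃ L : ℝ, Tendsto (energyE α β lam Φ xstar x x') atTop (𝓝 L) := by
  have hanti := hsol.antitoneOn_rpow_mul_energyE hβ hlam hΦ hgrad hmin hstar
  have hbdd := (bddBelow_rpow_mul_energyE (x := x) (x' := x') hβ
    (Icc_subset_Icc_left zero_le_two hlam) hmin (α - 2)).mono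
    (image_mono (Ioi_subset_Ioi (le_max_right t₀ β)))
  obtain ⟨L, hL⟩ := exists_tendsto_atTop_of_antitoneOn_Ioi hanti hbdd
  have hweight := tendsto_div_sub_const_rpow_atTop β (α - 2)
  refine ⟨hanti, L / 1, (hL.div hweight one_ne_zero).congr' ?_⟩
  filter_upwards [hweight.eventually_ne one_ne_zero] with t ht
  exact mul_div_cancel_left₀ _ ht

theorem stmt5 (α β t₀ : ℝ) (hα : 3 ≤ α) (hβ : 0 < β) (ht₀ : 0 < t₀)
    (Φ : H → ℝ) (hconv : ConvexOn ℝ Set.univ Φ) (hΦ : ContDiff ℝ 2 Φ)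
    (xstar : H) (hmin : ∀ z, Φ xstar ≤ Φ z)
    (x x' x'' : ℝ → H) (hsol : IsDINAVDSolution α β t₀ Φ x x' x'')
    (lam : ℝ) (hlam : lam ∈ Set.Icc 2 (α - 1)) :
    AntitoneOn (fun t => (t / (t - β)) ^ (α - 2) * energyE α β lam Φ xstar x x' t)
      (Set.Ioi (max t₀ β)) ∧
    ∃ L : ℝ, Tendsto (energyE α β lam Φ xstar x x') atTop (𝓝 L) := by
  have hd : Differentiable ℝ Φ := hΦ.differentiable two_ne_zero
  exact stmt5_general hsol hβ.le hlam hd (differentiable_gradient hΦ) hmin fun z =>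
    sub_le_inner_gradient_of_convexOn hconv (mem_univ z) (mem_univ xstar) (hd z)
end
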